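/- Let A_ψ be the 3×3 real matrix with (A_ψ)₁₂ = (A_ψ)₂₃ = 1 and all other entries 0, C_ψ the 1×3 real matrix [1 0 0], and B_{ω,ψ} the 3×1 real matrix (0,0,1)ᵀ. Let P be a symmetric positive-definite real 3×3 matrix and W a real 3×1 matrix such that A_ψᵀ·P + P·A_ψ + C_ψᵀ·Wᵀ + W·C_ψ + I₃ is negative semidefinite, and set L := −P⁻¹·W. Let ω : ℝ → ℝ satisfy |ω(t)| ≤ ω* for all t, with ω* ≥ 0, let θ ∈ (0,1), and let e : ℝ → ℝ³ be differentiable with e'(t) = (A_ψ − L·C_ψ)·e(t) + B_{ω,ψ}·ω(t) for all t. Then at every time t at which ‖e(t)‖ ≥ 2·‖P·B_{ω,ψ}‖·ω*/θ, the function V(s) := (1/2)·e(s)ᵀ·P·e(s) is differentiable at t and its derivative at t is at most −(1/2)·(1−θ)·‖e(t)‖². -/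

import Mathlib

/-!
The derivative of `V = (1/2) eᵀPe` along a trajectory is `eᵀPė`. The choice `L = -P⁻¹W` makes
`P (Aψ - L Cψ) = P Aψ + W Cψ`, so the matrix inequality says exactly that the drift contributes
at most `-(1/2)‖e‖²`. By Cauchy–Schwarz the disturbance contributes at most `‖P Bωψ‖ ω* ‖e‖`,
and outside the ball this is at most `(θ/2)‖e‖²`.
-/

open Matrix

/-- The Euclidean norm of a vector in `ℝⁿ`. -/
noncomputable def euclNorm {n : ℕ} (x : Fin n → ℝ) : ℝ := Real.sqrt (∑ i, x i ^ 2)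

/-- The rotational system matrix `A_ψ`. -/
def Aψ : Matrix (Fin 3) (Fin 3) ℝ := !![0, 1, 0; 0, 0, 1; 0, 0, 0]

/-- The rotational output matrix `C_ψ = [1 0 0]`. -/
def Cψ : Matrix (Fin 1) (Fin 3) ℝ := !![1, 0, 0]

/-- The rotational disturbance input matrix `B_{ω,ψ} = (0,0,1)ᵀ`. -/
def Bωψ : Matrix (Fin 3) (Fin 1) ℝ := !![0; 0; 1]

theorem euclNorm_sq {n : ℕ} (x : Fin n → ℝ) : euclNorm x ^ 2 = x ⬝ᵥ x := by
  unfold euclNorm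
  rw [Real.sq_sqrt (Finset.sum_nonneg fun i _ => sq_nonneg _)]
  simp [dotProduct, sq]

theorem euclNorm_nonneg {n : ℕ} (x : Fin n → ℝ) : 0 ≤ euclNorm x := Real.sqrt_nonneg _

/-- Cauchy–Schwarz. -/
theorem abs_dotProduct_le {n : ℕ} (x y : Fin n → ℝ) :
    |x ⬝ᵥ y| ≤ euclNorm x * euclNorm y := by
  refine abs_le_of_sq_le_sq ?_ (mul_nonneg (euclNorm_nonneg x) (euclNorm_nonneg y))
  rw [mul_pow, euclNorm_sq, euclNorm_sq]
  simpa [dotProduct, sq] using Finset.sum_mul_sq_le_sq_mul_sq Finset.univ x y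

theorem hasDerivAt_half_quadratic {n : ℕ} {P : Matrix (Fin n) (Fin n) ℝ} (hP : Pᵀ = P)
    {e : ℝ → Fin n → ℝ} {v : Fin n → ℝ} {t : ℝ} (he : HasDerivAt e v t) :
    HasDerivAt (fun s => (1 / 2) * (e s ⬝ᵥ P *ᵥ e s)) (e t ⬝ᵥ P *ᵥ v) t := by
  have hc := hasDerivAt_pi.1 he
  have hPe : ∀ i, HasDerivAt (fun s => (P *ᵥ e s) i) ((P *ᵥ v) i) t := by
    intro i
    simp only [mulVec, dotProduct]
    exact HasDerivAt.fun_sum fun j _ => (hc j).const_mul (P i j)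
  have h : HasDerivAt (fun s => e s ⬝ᵥ P *ᵥ e s)
      (∑ i, (v i * (P *ᵥ e t) i + e t i * (P *ᵥ v) i)) t :=
    HasDerivAt.fun_sum fun i _ => (hc i).mul (hPe i)
  refine (h.const_mul (1 / 2)).congr_deriv ?_
  have hsymm : v ⬝ᵥ P *ᵥ e t = e t ⬝ᵥ P *ᵥ v := by
    rw [dotProduct_mulVec, ← mulVec_transpose, hP, dotProduct_comm]
  rw [Finset.sum_add_distrib]
  change 1 / 2 * (v ⬝ᵥ P *ᵥ e t + e t ⬝ᵥ P *ᵥ v) = _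
  rw [hsymm]; ring

/-- The matrix inequality as a bound on the undisturbed part of the derivative of `V`. The two
transposed summands of the inequality have the same quadratic form as the other two, which is
where the factor `1/2` comes from. -/
theorem drift_le {P : Matrix (Fin 3) (Fin 3) ℝ} {W : Matrix (Fin 3) (Fin 1) ℝ} (hP : Pᵀ = P)
    (hLMI : (-(Aψᵀ * P + P * Aψ + Cψᵀ * Wᵀ + W * Cψ + 1)).PosSemidef) (x : Fin 3 → ℝ) :
    x ⬝ᵥ (P * Aψ + W * Cψ) *ᵥ x ≤ -(1 / 2) * euclNorm x ^ 2 := by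
  have h := hLMI.dotProduct_mulVec_nonneg x
  have hM : Aψᵀ * P + P * Aψ + Cψᵀ * Wᵀ + W * Cψ + 1
      = (P * Aψ + W * Cψ)ᵀ + (P * Aψ + W * Cψ) + 1 := by
    rw [transpose_add, transpose_mul, transpose_mul, hP]; abel
  have hT : x ⬝ᵥ (P * Aψ + W * Cψ)ᵀ *ᵥ x = x ⬝ᵥ (P * Aψ + W * Cψ) *ᵥ x := by
    rw [mulVec_transpose, dotProduct_comm, ← dotProduct_mulVec]
  rw [hM, star_trivial, neg_mulVec, dotProduct_neg, add_mulVec _ 1, add_mulVec (_ᵀ),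
    dotProduct_add, dotProduct_add, hT, one_mulVec, ← euclNorm_sq] at h
  linarith

/-- Core decrease estimate of Theorem 1 (eqs. (25)–(26)): outside the ball of
radius `2‖P·B_{ω,ψ}‖ω*/θ`, the Lyapunov function `V(e) = (1/2)eᵀPe` strictly
decreases along the rotational error dynamics. -/
theorem stmt_4 (P : Matrix (Fin 3) (Fin 3) ℝ) (W : Matrix (Fin 3) (Fin 1) ℝ)
    (hP : P.PosDef)
    (hLMI : (-(Aψᵀ * P + P * Aψ + Cψᵀ * Wᵀ + W * Cψ + 1)).PosSemidef)
    (L : Matrix (Fin 3) (Fin 1) ℝ) (hL : L = -(P⁻¹ * W))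
    (ω : ℝ → ℝ) (ωstar : ℝ) (hωstar : 0 ≤ ωstar) (hω : ∀ t, |ω t| ≤ ωstar)
    (θ : ℝ) (hθ : θ ∈ Set.Ioo (0 : ℝ) 1)
    (e : ℝ → Fin 3 → ℝ)
    (he : ∀ t, HasDerivAt e ((Aψ - L * Cψ).mulVec (e t) + Bωψ.mulVec ![ω t]) t)
    (t : ℝ)
    (ht : 2 * euclNorm (fun i => (P * Bωψ) i 0) * ωstar / θ ≤ euclNorm (e t)) :
    DifferentiableAt ℝ (fun s => (1 / 2) * (e s ⬝ᵥ P.mulVec (e s))) t ∧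
      deriv (fun s => (1 / 2) * (e s ⬝ᵥ P.mulVec (e s))) t
        ≤ -(1 / 2) * (1 - θ) * euclNorm (e t) ^ 2 := by
  have hPt : Pᵀ = P := by simpa using hP.isHermitian.eq
  have hV := hasDerivAt_half_quadratic hPt (he t)
  refine ⟨hV.differentiableAt, ?_⟩
  rw [hV.deriv]
  have hPL : P * (Aψ - L * Cψ) = P * Aψ + W * Cψ := by
    have hdet : IsUnit P.det := hP.det_pos.ne'.isUnit
    rw [hL, Matrix.mul_sub, ← Matrix.mul_assoc, Matrix.mul_neg,
      Matrix.mul_nonsing_inv_cancel_left _ _ hdet, Matrix.neg_mul, sub_neg_eq_add]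
  have hB : (P * Bωψ) *ᵥ ![ω t] = ω t • fun i => (P * Bωψ) i 0 := by
    ext i
    simp [mulVec, dotProduct, mul_comm]
  rw [mulVec_add, mulVec_mulVec, mulVec_mulVec, hPL, hB, dotProduct_add, dotProduct_smul,
    smul_eq_mul]
  set b : Fin 3 → ℝ := fun i => (P * Bωψ) i 0
  have hdrift := drift_le hPt hLMI (e t)
  have hdist : ω t * (e t ⬝ᵥ b) ≤ ωstar * (euclNorm (e t) * euclNorm b) := by
    refine (le_abs_self _).trans ?_
    rw [abs_mul]
    exact mul_le_mul (hω t) (abs_dotProduct_le _ _) (abs_nonneg _) hωstar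
  rw [div_le_iff₀ hθ.1] at ht
  have hball := mul_le_mul_of_nonneg_left ht (euclNorm_nonneg (e t))
  linarith
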